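/- Every exact-repair regenerating code with parameters (n,k,d) = (5,4,4) and secondary parameters (B,α,β) satisfies 14B ≤ 21α + 57β (equivalently, 14B ≤ 7B_1 + 7B_2 − 6β, where B_1 = α + 6β and B_2 = 2α + 3β). -/

import Mathlib

open Finset

/-- Shannon entropy (base 2) of a finitely-valued random variable `X` on a finite
probability space with mass function `P`. -/
noncomputable def entH {Ω S : Type*} [Fintype Ω] (P : Ω → ℝ) (X : Ω → S) : ℝ :=
  letI := Classical.decEq S
  ∑ s ∈ Finset.univ.image X,
    -((∑ ω ∈ Finset.univ.filter (fun ω => X ω = s), P ω) *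
       Real.logb 2 (∑ ω ∈ Finset.univ.filter (fun ω => X ω = s), P ω))

/-- Conditional entropy `H(X | Y) = H(X, Y) - H(Y)`. -/
noncomputable def condH {Ω S T : Type*} [Fintype Ω] (P : Ω → ℝ) (X : Ω → S) (Y : Ω → T) : ℝ :=
  entH P (fun ω => (X ω, Y ω)) - entH P Y

/-- The joint random variable `W_J = (W_j : j ∈ J)`. -/
def jointW {Ω : Type*} {n : ℕ} {σW : Fin n → Type*} (W : ∀ j, Ω → σW j)
    (J : Finset (Fin n)) : Ω → ∀ j : J, σW j.1 :=
  fun ω j => W j.1 ω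

/-- The joint random variable `(S_i^j : (i,j) ∈ E)` for a set `E` of pairs. -/
def jointS {Ω : Type*} {n : ℕ} {σS : Fin n → Fin n → Type*} (S : ∀ i j, Ω → σS i j)
    (E : Finset (Fin n × Fin n)) : Ω → ∀ e : E, σS e.1.1 e.1.2 :=
  fun ω e => S e.1.1 e.1.2 ω

/-- The joint random variable `S_I^j = (S_i^j : i ∈ I)`. -/
def jointSto {Ω : Type*} {n : ℕ} {σS : Fin n → Fin n → Type*} (S : ∀ i j, Ω → σS i j)
    (I : Finset (Fin n)) (j : Fin n) : Ω → ∀ i : I, σS i.1 j :=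
  fun ω i => S i.1 j ω

/-- An exact-repair regenerating code with parameters `(n,k,d)` (with `1 ≤ k ≤ d ≤ n-1`)
and secondary parameters `(B,α,β)`: the file `M`, the stored data `W j` on server `j`
(servers indexed by `Fin n`, server `j` of the paper being index `j-1`), and the helper
information `S i j` sent from server `i` to repair server `j`. -/
structure IsRegenCode {Ω : Type*} [Fintype Ω] (n k d : ℕ) (B α β : ℝ) (P : Ω → ℝ)
    {σM : Type*} {σW : Fin n → Type*} {σS : Fin n → Fin n → Type*}
    (M : Ω → σM) (W : ∀ j, Ω → σW j) (S : ∀ i j, Ω → σS i j) : Prop where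
  prob_nonneg : ∀ ω, 0 ≤ P ω
  prob_sum : ∑ ω, P ω = 1
  hk : 1 ≤ k
  hkd : k ≤ d
  hdn : d + 1 ≤ n
  hB : 0 ≤ B
  hα : 0 ≤ α
  hβ : 0 ≤ β
  hMB : entH P M = B
  hWα : ∀ j, entH P (W j) = α
  hWM : ∀ j, condH P (W j) M = 0
  hMW : ∀ J : Finset (Fin n), k ≤ J.card → condH P M (jointW W J) = 0
  hSβ : ∀ i j, i ≠ j → entH P (S i j) = β
  hSW : ∀ i j, i ≠ j → condH P (S i j) (W i) = 0
  hWS : ∀ (j : Fin n) (I : Finset (Fin n)), d ≤ I.card → j ∉ I →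
    condH P (W j) (jointSto S I j) = 0

/-- `B_q = qα + ((k-q)(k-q-1)/2)β + (d+1-k)(k-q)β`. -/
noncomputable def Bfun (k d q : ℕ) (α β : ℝ) : ℝ :=
  (q : ℝ) * α + (((k - q) * (k - q - 1) : ℕ) : ℝ) / 2 * β
    + (((d + 1 - k) * (k - q) : ℕ) : ℝ) * β

/-! ### Entropy of a partition of a finite weighted space -/

/-- The mass of the class of `ω` under the equivalence relation `r`. -/
noncomputable def classMass {Ω : Type*} [Fintype Ω] (P : Ω → ℝ) (r : Setoid Ω) (ω : Ω) : ℝ :=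
  letI := Classical.propDecidable
  ∑ ω', if r ω' ω then P ω' else 0

/-- The entropy of the partition of `Ω` into the classes of `r`. -/
noncomputable def partitionEnt {Ω : Type*} [Fintype Ω] (P : Ω → ℝ) (r : Setoid Ω) : ℝ :=
  -∑ ω, P ω * Real.logb 2 (classMass P r ω)

section Partition

variable {Ω : Type*} [Fintype Ω] {P : Ω → ℝ}

theorem entH_eq_partitionEnt {S : Type*} (P : Ω → ℝ) (X : Ω → S) :
    entH P X = partitionEnt P (Setoid.ker X) := by
  classical
  have hmass : ∀ ω, classMass P (Setoid.ker X) ω =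
      ∑ ω' ∈ univ.filter (fun ω' => X ω' = X ω), P ω' := fun ω => by
    rw [classMass, Finset.sum_filter]
    refine Finset.sum_congr rfl fun ω' _ => ?_
    simp only [Setoid.ker_def]
  unfold entH partitionEnt
  rw [← Finset.sum_neg_distrib,
    ← Finset.sum_fiberwise_of_maps_to (s := univ) (t := univ.image X) (g := X)
      (fun ω _ => Finset.mem_image_of_mem X (Finset.mem_univ ω))]
  refine Finset.sum_congr (by congr) fun s _ => ?_
  rw [Finset.sum_neg_distrib]
  congr 1
  have h : ∀ ω ∈ univ.filter (fun ω => X ω = s), P ω * Real.logb 2 (classMass P (Setoid.ker X) ω) =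
      P ω * Real.logb 2 (∑ ω' ∈ univ.filter (fun ω' => X ω' = s), P ω') := fun ω hω => by
    rw [hmass, (Finset.mem_filter.1 hω).2]
  rw [Finset.sum_congr rfl h, ← Finset.sum_mul]

theorem condH_eq_partitionEnt {S T : Type*} (P : Ω → ℝ) (X : Ω → S) (Y : Ω → T) :
    condH P X Y =
      partitionEnt P (Setoid.ker X ⊓ Setoid.ker Y) - partitionEnt P (Setoid.ker Y) := by
  rw [condH, entH_eq_partitionEnt, entH_eq_partitionEnt]
  congr 2
  ext ω ω'
  simp [Setoid.ker_def, Setoid.inf_def]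

theorem partitionEnt_top (hsum : ∑ ω, P ω = 1) : partitionEnt P ⊤ = 0 := by
  simp [partitionEnt, classMass, Setoid.top_def, hsum]

theorem classMass_congr {r : Setoid Ω} {ω ω' : Ω} (h : r ω ω') :
    classMass P r ω = classMass P r ω' := by
  classical
  refine Finset.sum_congr rfl fun x _ => ?_
  have : r x ω ↔ r x ω' := ⟨fun hx => r.trans' hx h, fun hx => r.trans' hx (r.symm' h)⟩
  simp only [this]

theorem le_classMass (hP : ∀ ω, 0 ≤ P ω) (r : Setoid Ω) (ω : Ω) : P ω ≤ classMass P r ω := by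
  classical
  have := Finset.single_le_sum (f := fun ω' => if r ω' ω then P ω' else 0)
    (fun ω' _ => by split_ifs <;> simp [hP]) (Finset.mem_univ ω)
  simpa [r.refl' ω, classMass] using this

theorem classMass_mono (hP : ∀ ω, 0 ≤ P ω) {r s : Setoid Ω} (h : r ≤ s) (ω : Ω) :
    classMass P r ω ≤ classMass P s ω := by
  classical
  refine Finset.sum_le_sum fun ω' _ => ?_
  by_cases h1 : r ω' ω
  · simp [h1, h h1]
  · simp only [h1, if_false]
    split_ifs <;> simp [hP]

theorem partitionEnt_anti (hP : ∀ ω, 0 ≤ P ω) {r s : Setoid Ω} (h : r ≤ s) :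
    partitionEnt P s ≤ partitionEnt P r := by
  refine neg_le_neg (Finset.sum_le_sum fun ω _ => ?_)
  rcases (hP ω).eq_or_lt with h0 | h0
  · simp [← h0]
  · exact mul_le_mul_of_nonneg_left (Real.logb_le_logb_of_le one_lt_two
      (h0.trans_le (le_classMass hP r ω)) (classMass_mono hP h ω)) h0.le

/-- The quotient of masses that appears in the submodularity of the entropy has mean at most
the total mass. -/
theorem sum_mul_classMass_div_le (hP : ∀ ω, 0 ≤ P ω) {r s t : Setoid Ω} (hr : r ≤ t) (hs : s ≤ t) :
    ∑ ω, P ω * (classMass P r ω * classMass P s ω / (classMass P (r ⊓ s) ω * classMass P t ω)) ≤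
      ∑ ω, P ω := by
  classical
  have hnn : ∀ (u : Setoid Ω) ω, 0 ≤ classMass P u ω := fun u ω =>
    (hP ω).trans (le_classMass hP u ω)
  have expand : ∀ ω, P ω * (classMass P r ω * classMass P s ω /
      (classMass P (r ⊓ s) ω * classMass P t ω)) =
      ∑ x, ∑ y, if r x ω ∧ s y ω then
        P x * P y * (P ω / (classMass P (r ⊓ s) ω * classMass P t ω)) else 0 := fun ω => by
    have : P ω * (classMass P r ω * classMass P s ω /
        (classMass P (r ⊓ s) ω * classMass P t ω)) = classMass P r ω * classMass P s ω *
        (P ω / (classMass P (r ⊓ s) ω * classMass P t ω)) := by ring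
    rw [this]
    nth_rewrite 1 [classMass]
    nth_rewrite 1 [classMass]
    rw [Finset.sum_mul_sum, Finset.sum_mul]
    refine Finset.sum_congr rfl fun x _ => ?_
    rw [Finset.sum_mul]
    refine Finset.sum_congr rfl fun y _ => ?_
    by_cases h1 : r x ω <;> by_cases h2 : s y ω <;> simp [h1, h2]
  simp_rw [expand]
  rw [Finset.sum_comm]
  refine Finset.sum_le_sum fun x _ => ?_
  rw [Finset.sum_comm]
  have inner : ∀ y, (∑ ω, if r x ω ∧ s y ω then
      P x * P y * (P ω / (classMass P (r ⊓ s) ω * classMass P t ω)) else 0) ≤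
      (if t y x then P y else 0) * (P x / classMass P t x) := fun y => by
    by_cases hex : ∃ ω, r x ω ∧ s y ω
    · obtain ⟨w, hw1, hw2⟩ := hex
      have hyx : t y x := t.trans' (hs hw2) (t.symm' (hr hw1))
      have heq : ∀ ω, (if r x ω ∧ s y ω then
          P x * P y * (P ω / (classMass P (r ⊓ s) ω * classMass P t ω)) else 0) =
          P y * (P x / classMass P t x) / classMass P (r ⊓ s) w *
            (if (r ⊓ s) ω w then P ω else 0) := fun ω => by
        have hiff : (r x ω ∧ s y ω) ↔ (r ⊓ s) ω w := by
          refine Iff.trans ⟨fun h => ⟨r.trans' (r.symm' h.1) hw1, s.trans' (s.symm' h.2) hw2⟩,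
            fun h => ⟨r.trans' hw1 (r.symm' h.1), s.trans' hw2 (s.symm' h.2)⟩⟩ Iff.rfl
        by_cases h : (r ⊓ s) ω w
        · rw [if_pos (hiff.2 h), if_pos h, classMass_congr h,
            classMass_congr (t.symm' (hr (hiff.2 h).1))]
          simp only [div_eq_mul_inv, mul_inv]
          ring
        · rw [if_neg (fun h' => h (hiff.1 h')), if_neg h, mul_zero]
      simp_rw [heq]
      rw [← Finset.mul_sum, if_pos hyx]
      have hmass : (∑ ω, if (r ⊓ s) ω w then P ω else 0) = classMass P (r ⊓ s) w := by
        unfold classMass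
        congr!
      rw [hmass]
      have hc : 0 ≤ P y * (P x / classMass P t x) :=
        mul_nonneg (hP y) (div_nonneg (hP x) (hnn t x))
      rcases (hnn (r ⊓ s) w).eq_or_lt with h0 | h0
      · rw [← h0, mul_zero]
        exact hc
      · rw [div_mul_cancel₀ _ h0.ne']
    · rw [Finset.sum_eq_zero fun ω _ => if_neg fun h => hex ⟨ω, h⟩]
      have := hP y
      have := div_nonneg (hP x) (hnn t x)
      split_ifs <;> positivity
  refine (Finset.sum_le_sum fun y _ => inner y).trans ?_
  rw [← Finset.sum_mul]
  have hmass : (∑ y, if t y x then P y else 0) = classMass P t x := by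
    unfold classMass
    congr!
  rw [hmass]
  rcases (hnn t x).eq_or_lt with h0 | h0
  · rw [← h0, zero_mul]
    exact hP x
  · rw [mul_div_cancel₀ _ h0.ne']

theorem partitionEnt_submod (hP : ∀ ω, 0 ≤ P ω) {r s t : Setoid Ω} (hr : r ≤ t) (hs : s ≤ t) :
    partitionEnt P (r ⊓ s) + partitionEnt P t ≤ partitionEnt P r + partitionEnt P s := by
  have hlog : ∀ ω, P ω * (Real.log (classMass P r ω) + Real.log (classMass P s ω)
      - Real.log (classMass P (r ⊓ s) ω) - Real.log (classMass P t ω)) ≤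
      P ω * (classMass P r ω * classMass P s ω /
        (classMass P (r ⊓ s) ω * classMass P t ω)) - P ω := fun ω => by
    rcases (hP ω).eq_or_lt with h0 | h0
    · simp [← h0]
    · have hpos : ∀ u : Setoid Ω, 0 < classMass P u ω := fun u => h0.trans_le (le_classMass hP u ω)
      have h1 := hpos r
      have h2 := hpos s
      have h3 := hpos (r ⊓ s)
      have h4 := hpos t
      have h := Real.log_le_sub_one_of_pos (x := classMass P r ω * classMass P s ω /
        (classMass P (r ⊓ s) ω * classMass P t ω)) (by positivity)
      rw [Real.log_div (by positivity) (by positivity), Real.log_mul h1.ne' h2.ne',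
        Real.log_mul h3.ne' h4.ne'] at h
      nlinarith
  have hle := Finset.sum_le_sum fun ω (_ : ω ∈ (univ : Finset Ω)) => hlog ω
  rw [Finset.sum_sub_distrib] at hle
  have hquot := sum_mul_classMass_div_le hP hr hs
  have hlog2 : 0 < Real.log 2 := Real.log_pos one_lt_two
  have key : (∑ ω, P ω * (Real.log (classMass P r ω) + Real.log (classMass P s ω)
      - Real.log (classMass P (r ⊓ s) ω) - Real.log (classMass P t ω))) / Real.log 2 ≤ 0 :=
    div_nonpos_of_nonpos_of_nonneg (by linarith) hlog2.le
  have split : (∑ ω, P ω * (Real.log (classMass P r ω) + Real.log (classMass P s ω)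
      - Real.log (classMass P (r ⊓ s) ω) - Real.log (classMass P t ω))) / Real.log 2 =
      partitionEnt P (r ⊓ s) + partitionEnt P t - partitionEnt P r - partitionEnt P s := by
    simp only [partitionEnt, Real.logb, ← Finset.sum_neg_distrib, ← Finset.sum_add_distrib,
      ← Finset.sum_sub_distrib, Finset.sum_div]
    exact Finset.sum_congr rfl fun ω _ => by ring
  linarith

/-- Information that is free given `r` is free given any finer partition. -/
theorem partitionEnt_inf_eq_of_le (hP : ∀ ω, 0 ≤ P ω) {r s t : Setoid Ω} (hr : r ≤ s)
    (h : partitionEnt P (s ⊓ t) = partitionEnt P s) :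
    partitionEnt P (r ⊓ t) = partitionEnt P r := by
  have hsub := partitionEnt_submod hP hr (inf_le_left : s ⊓ t ≤ s)
  rw [← inf_assoc, inf_eq_left.2 hr] at hsub
  exact le_antisymm (by linarith) (partitionEnt_anti hP inf_le_left)

theorem partitionEnt_inf_finset_inf (hP : ∀ ω, 0 ≤ P ω) {ι : Type*} {r : Setoid Ω}
    {t : ι → Setoid Ω} (h : ∀ i, partitionEnt P (r ⊓ t i) = partitionEnt P r) (I : Finset ι) :
    partitionEnt P (r ⊓ I.inf t) = partitionEnt P r := by
  classical
  induction I using Finset.induction_on with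
  | empty => simp
  | insert i I _ ih =>
    rw [Finset.inf_insert, inf_comm (t i), ← inf_assoc,
      partitionEnt_inf_eq_of_le hP inf_le_left (h i), ih]

end Partition

/-! ### Set functions on the data of a regenerating code

The pair `(i, j)` with `i ≠ j` stands for the helper data sent from server `i` to server `j`, and
the pair `(i, i)` for the data stored on server `i`. -/

/-- A symmetric polymatroid on the pairs of servers in which a server determines the helper data
it sends and is determined by all the helper data it receives. -/
structure IsRepairPolymatroid {n : ℕ} (f : Finset (Fin n × Fin n) → ℝ) : Prop where
  empty : f ∅ = 0
  mono : ∀ {X Y}, X ⊆ Y → f X ≤ f Y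
  submod : ∀ X Y, f (X ∪ Y) + f (X ∩ Y) ≤ f X + f Y
  send : ∀ {X} {i : Fin n} (j : Fin n), (i, i) ∈ X → f (insert (i, j) X) = f X
  repair : ∀ {X} {j : Fin n}, (∀ i, i ≠ j → (i, j) ∈ X) → f (insert (j, j) X) = f X
  symm : ∀ {p : Fin n → Fin n}, p.Injective → ∀ X, f (X.image (Prod.map p p)) = f X

/-- The data obtained from `X` by one round of sending and repairing. -/
def repairStep {n : ℕ} (X : Finset (Fin n × Fin n)) : Finset (Fin n × Fin n) :=
  univ.filter fun e => e ∈ X ∨ (e.1, e.1) ∈ X ∨ (e.1 = e.2 ∧ ∀ i, i ≠ e.1 → (i, e.1) ∈ X)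

/-- The data obtained from `X` by `2 * n` rounds of sending and repairing. -/
def repairClosure {n : ℕ} (X : Finset (Fin n × Fin n)) : Finset (Fin n × Fin n) :=
  repairStep^[2 * n] X

namespace IsRepairPolymatroid

variable {n : ℕ} {f : Finset (Fin n × Fin n) → ℝ}

theorem union_eq (hf : IsRepairPolymatroid f) {X : Finset (Fin n × Fin n)}
    (Y : Finset (Fin n × Fin n)) (h : ∀ e ∈ Y, f (insert e X) = f X) : f (X ∪ Y) = f X := by
  induction Y using Finset.induction_on with
  | empty => simp
  | insert e Y _ ih =>
    have hY := ih fun e he => h e (Finset.mem_insert_of_mem he)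
    have he := h e (Finset.mem_insert_self e Y)
    have hsub := hf.submod (X ∪ Y) (insert e X)
    have h1 : X ∪ insert e Y = (X ∪ Y) ∪ insert e X := by
      ext; simp; tauto
    have h2 : f X ≤ f ((X ∪ Y) ∩ insert e X) :=
      hf.mono (Finset.subset_inter Finset.subset_union_left (Finset.subset_insert e X))
    have h3 : f X ≤ f (X ∪ insert e Y) := hf.mono Finset.subset_union_left
    rw [h1] at h3 ⊢
    linarith

theorem map_repairStep (hf : IsRepairPolymatroid f) (X : Finset (Fin n × Fin n)) :
    f (repairStep X) = f X := by
  have h : X ∪ repairStep X = repairStep X :=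
    Finset.union_eq_right.2 fun e he => Finset.mem_filter.2 ⟨Finset.mem_univ e, Or.inl he⟩
  rw [← h]
  refine hf.union_eq _ fun e he => ?_
  obtain ⟨a, b⟩ := e
  rcases (Finset.mem_filter.1 he).2 with h | h | ⟨h1, h2⟩
  · rw [Finset.insert_eq_of_mem h]
  · exact hf.send b h
  · obtain rfl : a = b := h1
    exact hf.repair h2

theorem map_repairClosure (hf : IsRepairPolymatroid f) (X : Finset (Fin n × Fin n)) :
    f (repairClosure X) = f X := by
  have h : ∀ m : ℕ, f (repairStep^[m] X) = f X := fun m => by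
    induction m with
    | zero => rfl
    | succ m ih => rw [Function.iterate_succ_apply', hf.map_repairStep, ih]
  exact h (2 * n)

/-- Data that can be recovered from `Y` after relabeling the servers by `p` has rank at most
that of `Y`. -/
theorem le_of_perm_subset (hf : IsRepairPolymatroid f) (p : Fin n → Fin n)
    {X Y : Finset (Fin n × Fin n)}
    (h : p.Injective ∧ X.image (Prod.map p p) ⊆ repairClosure Y) : f X ≤ f Y := by
  rw [← hf.symm h.1 X, ← hf.map_repairClosure Y]
  exact hf.mono h.2

/-- Submodularity of a repair polymatroid, up to relabeling the servers. -/
theorem submod_perm (hf : IsRepairPolymatroid f) (p q r : Fin n → Fin n)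
    {X Y U I : Finset (Fin n × Fin n)}
    (h : (p.Injective ∧ q.Injective ∧ r.Injective) ∧
      U.image (Prod.map q q) ⊆ repairClosure (X ∪ Y.image (Prod.map p p)) ∧
      I.image (Prod.map r r) ⊆ repairClosure X ∧
      I.image (Prod.map r r) ⊆ repairClosure (Y.image (Prod.map p p))) :
    f U + f I ≤ f X + f Y := by
  obtain ⟨⟨hp, hq, hr⟩, hU, hIX, hIY⟩ := h
  set Z := Y.image (Prod.map p p)
  have hsub := hf.submod (repairClosure X) (repairClosure Z)
  have hle : f (X ∪ Z) ≤ f (repairClosure X ∪ repairClosure Z) := by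
    have hstep : ∀ (m : ℕ) (A : Finset (Fin n × Fin n)), A ⊆ repairStep^[m] A := fun m A => by
      induction m with
      | zero => exact subset_rfl
      | succ m ih =>
        rw [Function.iterate_succ_apply']
        exact ih.trans fun e he => Finset.mem_filter.2 ⟨Finset.mem_univ e, Or.inl he⟩
    exact hf.mono (Finset.union_subset_union (hstep _ X) (hstep _ Z))
  have h1 : f U ≤ f (X ∪ Z) := by
    rw [← hf.symm hq U, ← hf.map_repairClosure (X ∪ Z)]
    exact hf.mono hU
  have h2 : f I ≤ f (repairClosure X ∩ repairClosure Z) := by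
    rw [← hf.symm hr I]
    exact hf.mono (Finset.subset_inter hIX hIY)
  rw [hf.map_repairClosure, hf.map_repairClosure, hf.symm hp] at hsub
  linarith

theorem le_sum_singleton (hf : IsRepairPolymatroid f) (X : Finset (Fin n × Fin n)) :
    f X ≤ ∑ e ∈ X, f {e} := by
  induction X using Finset.induction_on with
  | empty => simp [hf.empty]
  | insert e X he ih =>
    have hsub := hf.submod {e} X
    have hnn : 0 ≤ f ({e} ∩ X) := hf.empty.symm.le.trans (hf.mono (Finset.empty_subset _))
    rw [Finset.sum_insert he, Finset.insert_eq]
    linarith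

end IsRepairPolymatroid

/-- For `(n, k, d) = (5, 4, 4)` the rank of all the data is at most `10 β`. -/
theorem IsRepairPolymatroid.full_le_ten_mul {f : Finset (Fin 5 × Fin 5) → ℝ}
    (hf : IsRepairPolymatroid f) :
    f {(0, 0), (1, 1), (2, 2), (3, 3)} ≤ 10 * f {(0, 1)} := by
  have hcover : f {(0, 0), (1, 1), (2, 2), (3, 3)} ≤
      f (univ.filter fun e : Fin 5 × Fin 5 => e.2 < e.1) :=
    hf.le_of_perm_subset ![0, 1, 2, 3, 4] (by decide +kernel)
  have hsingle : ∀ e ∈ univ.filter (fun e : Fin 5 × Fin 5 => e.2 < e.1), f {e} ≤ f {(0, 1)} := by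
    have hperm : ∀ i j : Fin 5, j < i → ({(i, j)} : Finset (Fin 5 × Fin 5)) =
        image (Prod.map (Equiv.swap (Equiv.swap 0 i 1) j * Equiv.swap 0 i)
          (Equiv.swap (Equiv.swap 0 i 1) j * Equiv.swap 0 i)) {(0, 1)} := by decide +kernel
    rintro ⟨i, j⟩ he
    rw [hperm i j (Finset.mem_filter.1 he).2, hf.symm (Equiv.injective _)]
  have hcard : (univ.filter fun e : Fin 5 × Fin 5 => e.2 < e.1).card = 10 := by decide +kernel
  have := Finset.sum_le_card_nsmul _ _ _ hsingle
  rw [hcard, nsmul_eq_mul] at this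
  exact hcover.trans ((hf.le_sum_singleton _).trans (by exact_mod_cast this))

/-- For `(n, k, d) = (5, 4, 4)` three times the rank of all the data is at most `5 α + 10 β`. -/
theorem IsRepairPolymatroid.three_mul_full_le {f : Finset (Fin 5 × Fin 5) → ℝ}
    (hf : IsRepairPolymatroid f) :
    3 * f {(0, 0), (1, 1), (2, 2), (3, 3)} ≤ 5 * f {(0, 0)} + 10 * f {(0, 1)} := by
  have : f {(0, 1), (2, 3)} + f ∅ ≤ f {(0, 1)} + f {(0, 1)} :=
    hf.submod_perm ![2, 3, 0, 1, 4] ![0, 1, 2, 3, 4] ![0, 1, 2, 3, 4] (by decide +kernel)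
  have : f {(0, 0), (1, 2), (3, 2)} + f {(0, 1)} ≤ f {(0, 1), (2, 1)} + f {(0, 0), (1, 2)} :=
    hf.submod_perm ![3, 0, 1, 2, 4] ![3, 0, 1, 2, 4] ![0, 1, 2, 3, 4] (by decide +kernel)
  have : f {(0, 0), (1, 2)} + f ∅ ≤ f {(0, 0)} + f {(0, 1)} :=
    hf.submod_perm ![1, 2, 0, 3, 4] ![0, 1, 2, 3, 4] ![0, 1, 2, 3, 4] (by decide +kernel)
  have : f {(0, 0), (1, 0), (2, 3)} + f {(0, 1)} ≤ f {(0, 0), (1, 0)} + f {(0, 1), (2, 3)} :=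
    hf.submod_perm ![1, 0, 2, 3, 4] ![0, 1, 2, 3, 4] ![1, 0, 2, 3, 4] (by decide +kernel)
  have : f {(0, 0), (1, 2), (3, 4)} + f {(0, 1)} ≤ f {(0, 0), (1, 2)} + f {(0, 1), (2, 3)} :=
    hf.submod_perm ![1, 2, 3, 4, 0] ![0, 1, 2, 3, 4] ![1, 2, 0, 3, 4] (by decide +kernel)
  have : f {(0, 0), (1, 2), (3, 2)} + f {(0, 0)} ≤ f {(0, 0), (1, 2)} + f {(0, 0), (1, 2)} :=
    hf.submod_perm ![0, 3, 2, 1, 4] ![0, 1, 2, 3, 4] ![0, 1, 2, 3, 4] (by decide +kernel)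
  have : f {(0, 0), (1, 1), (2, 3)} + f {(0, 1), (2, 3)} ≤
      f {(0, 0), (1, 0), (2, 3)} + f {(0, 0), (1, 2)} :=
    hf.submod_perm ![1, 2, 3, 0, 4] ![0, 1, 2, 3, 4] ![1, 0, 2, 3, 4] (by decide +kernel)
  have : f {(0, 0), (1, 1), (2, 0)} + f {(0, 1), (2, 1)} ≤
      f {(0, 0), (1, 0), (2, 0)} + f {(0, 0), (1, 2)} :=
    hf.submod_perm ![1, 2, 0, 3, 4] ![0, 1, 2, 3, 4] ![1, 0, 2, 3, 4] (by decide +kernel)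
  have : f {(0, 0), (1, 0), (2, 0), (3, 1)} + f {(0, 0), (1, 0)} ≤
      f {(0, 0), (1, 0), (2, 0)} + f {(0, 0), (1, 0), (2, 1)} :=
    hf.submod_perm ![0, 1, 3, 2, 4] ![0, 1, 2, 3, 4] ![0, 1, 2, 3, 4] (by decide +kernel)
  have : f {(0, 0), (1, 2), (3, 2), (4, 2)} + f {(0, 0), (1, 2)} ≤
      f {(0, 0), (1, 2), (3, 2)} + f {(0, 0), (1, 2), (3, 2)} :=
    hf.submod_perm ![0, 1, 2, 4, 3] ![0, 1, 2, 3, 4] ![0, 1, 2, 3, 4] (by decide +kernel)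
  have : f {(0, 0), (1, 1), (2, 0), (3, 2)} + f {(0, 0), (1, 0)} ≤
      f {(0, 0), (1, 0), (2, 1)} + f {(0, 0), (1, 1), (2, 0)} :=
    hf.submod_perm ![0, 3, 1, 2, 4] ![0, 3, 1, 2, 4] ![0, 1, 2, 3, 4] (by decide +kernel)
  have : f {(0, 0), (1, 1), (2, 0), (3, 0), (4, 2)} + f {(0, 0), (1, 0), (2, 0)} ≤
      f {(0, 0), (1, 0), (2, 0), (3, 1)} + f {(0, 0), (1, 1), (2, 0), (3, 0)} :=
    hf.submod_perm ![0, 4, 1, 2, 3] ![0, 4, 1, 2, 3] ![0, 1, 2, 3, 4] (by decide +kernel)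
  have : f {(0, 0), (1, 1), (2, 3)} + f {(0, 0), (1, 2)} ≤
      f {(0, 0), (1, 1)} + f {(0, 0), (1, 2), (3, 4)} :=
    hf.submod_perm ![0, 1, 2, 3, 4] ![0, 1, 3, 4, 2] ![0, 1, 2, 3, 4] (by decide +kernel)
  have : f {(0, 0), (1, 1), (2, 0), (3, 2)} + f {(0, 0), (1, 0), (2, 1)} ≤
      f {(0, 0), (1, 1), (2, 0)} + f {(0, 0), (1, 0), (2, 1), (3, 1)} :=
    hf.submod_perm ![0, 2, 1, 3, 4] ![0, 1, 2, 3, 4] ![0, 2, 1, 3, 4] (by decide +kernel)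
  have : f {(0, 0), (1, 1), (2, 3), (4, 3)} + f {(0, 0), (1, 1)} ≤
      f {(0, 0), (1, 1), (2, 3)} + f {(0, 0), (1, 1), (2, 3)} :=
    hf.submod_perm ![0, 1, 4, 3, 2] ![0, 1, 2, 3, 4] ![0, 1, 2, 3, 4] (by decide +kernel)
  have : f {(0, 0), (1, 1), (2, 2), (3, 0)} + f {(0, 0), (1, 0), (2, 0), (3, 1)} ≤
      f {(0, 0), (1, 1), (2, 0), (3, 0)} + f {(0, 0), (1, 1), (2, 0), (3, 1)} :=
    hf.submod_perm ![0, 2, 3, 1, 4] ![0, 1, 2, 3, 4] ![0, 2, 3, 1, 4] (by decide +kernel)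
  have : f {(0, 0), (1, 1), (2, 0), (3, 0)} ≤ f {(0, 0), (1, 2), (3, 2), (4, 2)} :=
    hf.le_of_perm_subset ![2, 0, 1, 3, 4] (by decide +kernel)
  have : f {(0, 0), (1, 1), (2, 3), (4, 3)} + f {(0, 0), (1, 0), (2, 1), (3, 1)} ≤
      f {(0, 0), (1, 1), (2, 0), (3, 2)} + f {(0, 0), (1, 2), (3, 2), (4, 2)} :=
    hf.submod_perm ![0, 1, 2, 3, 4] ![0, 1, 3, 2, 4] ![0, 2, 1, 3, 4] (by decide +kernel)
  have : f {(0, 0), (1, 1), (2, 2), (3, 3)} + f {(0, 0), (1, 1), (2, 0)} ≤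
      f {(0, 0), (1, 1), (2, 0), (3, 2)} + f {(0, 0), (1, 1), (2, 2), (3, 0)} :=
    hf.submod_perm ![0, 1, 4, 2, 3] ![0, 1, 2, 3, 4] ![0, 1, 2, 3, 4] (by decide +kernel)
  have : f {(0, 0), (1, 1), (2, 0), (2, 3), (4, 3)} + f {(0, 0), (1, 1), (2, 0), (3, 2)} ≤
      f {(0, 0), (1, 1), (2, 3), (4, 3)} + f {(0, 0), (1, 1), (2, 0), (3, 0), (4, 2)} :=
    hf.submod_perm ![0, 1, 3, 2, 4] ![0, 1, 2, 3, 4] ![0, 1, 3, 4, 2] (by decide +kernel)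
  have : f {(0, 0), (1, 1), (2, 2), (3, 3)} + f {(0, 0), (1, 1), (2, 0), (3, 1)} ≤
      f {(0, 0), (1, 1), (2, 0), (3, 1), (4, 2)} + f {(0, 0), (1, 1), (2, 2), (3, 0)} :=
    hf.submod_perm ![0, 1, 3, 2, 4] ![0, 1, 2, 3, 4] ![0, 1, 2, 3, 4] (by decide +kernel)
  have : f {(0, 0), (1, 1), (2, 2), (3, 0)} ≤ f {(0, 0), (1, 1), (2, 3), (4, 3)} :=
    hf.le_of_perm_subset ![3, 0, 1, 2, 4] (by decide +kernel)
  have : f {(0, 0), (1, 1), (2, 2), (3, 0), (4, 1)} ≤ f {(0, 0), (1, 1), (2, 0), (2, 3), (4, 3)} :=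
    hf.le_of_perm_subset ![0, 3, 1, 2, 4] (by decide +kernel)
  have : f {(0, 0), (1, 1), (2, 2), (3, 3)} + f {(0, 0), (1, 1), (2, 0), (3, 1), (4, 2)} ≤
      f {(0, 0), (1, 1), (2, 2), (3, 0), (4, 1)} + f {(0, 0), (1, 1), (2, 0), (2, 3), (4, 3)} :=
    hf.submod_perm ![0, 1, 3, 4, 2] ![0, 1, 2, 3, 4] ![1, 0, 4, 3, 2] (by decide +kernel)
  have h0 := hf.empty
  linarith

/-! ### The repair polymatroid of a regenerating code -/

section Code

variable {Ω : Type*} {n k d : ℕ} {B α β : ℝ} {P : Ω → ℝ} {σM : Type*}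
  {σW : Fin n → Type*} {σS : Fin n → Fin n → Type*} {M : Ω → σM} {W : ∀ j, Ω → σW j}
  {S : ∀ i j, Ω → σS i j}

/-- The partition of `Ω` defined by the data that the pair `e` stands for. -/
def dataKer (W : ∀ j, Ω → σW j) (S : ∀ i j, Ω → σS i j) (e : Fin n × Fin n) : Setoid Ω :=
  if e.1 = e.2 then Setoid.ker (W e.1) else Setoid.ker (S e.1 e.2)

theorem dataKer_self (i : Fin n) : dataKer W S (i, i) = Setoid.ker (W i) := if_pos rfl

theorem dataKer_of_ne {i j : Fin n} (h : i ≠ j) : dataKer W S (i, j) = Setoid.ker (S i j) :=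
  if_neg h

theorem ker_subtype_pi {ι : Type*} {τ : ι → Type*} (X : ∀ i, Ω → τ i) (I : Finset ι) :
    Setoid.ker (fun (ω : Ω) (i : I) => X i.1 ω) = I.inf fun i => Setoid.ker (X i) := by
  classical
  have h : ∀ J : Finset ι, ∀ ω ω', (J.inf fun i => Setoid.ker (X i)) ω ω' ↔
      ∀ i ∈ J, X i ω = X i ω' := fun J ω ω' => by
    induction J using Finset.induction_on with
    | empty => exact ⟨fun _ i hi => absurd hi (Finset.notMem_empty i), fun _ => trivial⟩
    | insert i J _ ih =>
      rw [Finset.inf_insert, Finset.forall_mem_insert, ← ih]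
      exact Iff.rfl
  ext ω ω'
  rw [h, Setoid.ker_def, funext_iff]
  exact Subtype.forall

variable [Fintype Ω]

/-- The joint entropy of the data that the pairs in `X` stand for. -/
noncomputable def dataEnt (P : Ω → ℝ) (W : ∀ j, Ω → σW j) (S : ∀ i j, Ω → σS i j)
    (X : Finset (Fin n × Fin n)) : ℝ :=
  partitionEnt P (X.inf (dataKer W S))

/-- The average of the joint entropy over all relabelings of the servers. -/
noncomputable def symmDataEnt (P : Ω → ℝ) (W : ∀ j, Ω → σW j) (S : ∀ i j, Ω → σS i j)
    (X : Finset (Fin n × Fin n)) : ℝ :=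
  (∑ p : Equiv.Perm (Fin n), dataEnt P W S (X.image (Prod.map p p))) /
    Fintype.card (Equiv.Perm (Fin n))

theorem symmDataEnt_eq_of_forall {X : Finset (Fin n × Fin n)} {c : ℝ}
    (h : ∀ p : Equiv.Perm (Fin n), dataEnt P W S (X.image (Prod.map p p)) = c) :
    symmDataEnt P W S X = c := by
  have hcard : (Fintype.card (Equiv.Perm (Fin n)) : ℝ) ≠ 0 :=
    Nat.cast_ne_zero.2 Fintype.card_ne_zero
  rw [symmDataEnt, Finset.sum_congr rfl fun p _ => h p, Finset.sum_const, nsmul_eq_mul,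
    Finset.card_univ, mul_div_cancel_left₀ _ hcard]

namespace IsRegenCode

theorem dataEnt_mono (hcode : IsRegenCode n k d B α β P M W S) {X Y : Finset (Fin n × Fin n)}
    (h : X ⊆ Y) : dataEnt P W S X ≤ dataEnt P W S Y :=
  partitionEnt_anti hcode.prob_nonneg (Finset.inf_mono h)

theorem dataEnt_submod (hcode : IsRegenCode n k d B α β P M W S) (X Y : Finset (Fin n × Fin n)) :
    dataEnt P W S (X ∪ Y) + dataEnt P W S (X ∩ Y) ≤ dataEnt P W S X + dataEnt P W S Y := by
  unfold dataEnt
  rw [Finset.inf_union]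
  exact partitionEnt_submod hcode.prob_nonneg (Finset.inf_mono Finset.inter_subset_left)
    (Finset.inf_mono Finset.inter_subset_right)

theorem dataEnt_send (hcode : IsRegenCode n k d B α β P M W S) {X : Finset (Fin n × Fin n)}
    {i : Fin n} (j : Fin n) (hi : (i, i) ∈ X) :
    dataEnt P W S (insert (i, j) X) = dataEnt P W S X := by
  rcases eq_or_ne i j with rfl | hij
  · rw [Finset.insert_eq_of_mem hi]
  · have h := hcode.hSW i j hij
    rw [condH_eq_partitionEnt, sub_eq_zero, inf_comm] at h
    unfold dataEnt
    rw [Finset.inf_insert, inf_comm, dataKer_of_ne hij]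
    exact partitionEnt_inf_eq_of_le hcode.prob_nonneg
      ((Finset.inf_le hi).trans_eq (dataKer_self i)) h

theorem dataEnt_repair (hcode : IsRegenCode n k (n - 1) B α β P M W S)
    {X : Finset (Fin n × Fin n)} {j : Fin n} (hj : ∀ i, i ≠ j → (i, j) ∈ X) :
    dataEnt P W S (insert (j, j) X) = dataEnt P W S X := by
  have h := hcode.hWS j (univ.erase j) (by simp) (by simp)
  rw [condH_eq_partitionEnt, sub_eq_zero, inf_comm] at h
  unfold dataEnt
  rw [Finset.inf_insert, inf_comm, dataKer_self]
  refine partitionEnt_inf_eq_of_le hcode.prob_nonneg ?_ h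
  have hker := ker_subtype_pi (fun i => S i j) (univ.erase j)
  refine le_of_le_of_eq (Finset.le_inf fun i hi => ?_) hker.symm
  have hij := Finset.ne_of_mem_erase hi
  exact (Finset.inf_le (hj i hij)).trans_eq (dataKer_of_ne hij)

/-- Any `k` servers hold the whole file. -/
theorem dataEnt_diag (hcode : IsRegenCode n k d B α β P M W S) {J : Finset (Fin n)}
    (hJ : k ≤ J.card) : dataEnt P W S (J.image fun j => (j, j)) = B := by
  have hfile := hcode.hMW J hJ
  have hker : Setoid.ker (jointW W J) = J.inf fun j => Setoid.ker (W j) := ker_subtype_pi W J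
  rw [condH_eq_partitionEnt, hker, sub_eq_zero] at hfile
  have hstore : ∀ j, partitionEnt P (Setoid.ker M ⊓ Setoid.ker (W j)) =
      partitionEnt P (Setoid.ker M) := fun j => by
    have h := hcode.hWM j
    rwa [condH_eq_partitionEnt, sub_eq_zero, inf_comm] at h
  rw [partitionEnt_inf_finset_inf hcode.prob_nonneg hstore, ← entH_eq_partitionEnt,
    hcode.hMB] at hfile
  rw [hfile, dataEnt, Finset.inf_image]
  simp only [Function.comp_def, dataKer_self]

theorem isRepairPolymatroid (hcode : IsRegenCode n k (n - 1) B α β P M W S) :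
    IsRepairPolymatroid (symmDataEnt P W S) where
  empty := symmDataEnt_eq_of_forall fun p => by
    simpa [dataEnt] using partitionEnt_top hcode.prob_sum
  mono {X Y} h := div_le_div_of_nonneg_right
    (Finset.sum_le_sum fun p _ => hcode.dataEnt_mono (Finset.image_subset_image h))
    (Nat.cast_nonneg _)
  submod X Y := by
    unfold symmDataEnt
    rw [← add_div, ← add_div, ← Finset.sum_add_distrib, ← Finset.sum_add_distrib]
    refine div_le_div_of_nonneg_right (Finset.sum_le_sum fun p _ => ?_) (Nat.cast_nonneg _)
    rw [Finset.image_union, Finset.image_inter _ _ (p.injective.prodMap p.injective)]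
    exact hcode.dataEnt_submod _ _
  send {X i} j hi := by
    unfold symmDataEnt
    congr 1
    refine Finset.sum_congr rfl fun p _ => ?_
    rw [Finset.image_insert]
    exact hcode.dataEnt_send (p j) (Finset.mem_image_of_mem (Prod.map p p) hi)
  repair {X j} hj := by
    unfold symmDataEnt
    congr 1
    refine Finset.sum_congr rfl fun p _ => ?_
    rw [Finset.image_insert]
    refine hcode.dataEnt_repair fun i hi => Finset.mem_image.2 ⟨(p.symm i, j), hj _ ?_, by simp⟩
    rintro rfl
    exact hi (p.apply_symm_apply i).symm
  symm {p} hp X := by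
    unfold symmDataEnt
    congr 1
    rw [← Equiv.sum_comp (Equiv.mulRight (Equiv.ofBijective p hp.bijective_of_finite))
      fun q : Equiv.Perm (Fin n) => dataEnt P W S (X.image (Prod.map q q))]
    refine Finset.sum_congr rfl fun q _ => ?_
    rw [Finset.image_image]
    rfl

theorem symmDataEnt_server (hcode : IsRegenCode n k d B α β P M W S) (i : Fin n) :
    symmDataEnt P W S {(i, i)} = α :=
  symmDataEnt_eq_of_forall fun p => by
    rw [Finset.image_singleton, Prod.map_apply, dataEnt, Finset.inf_singleton, dataKer_self,
      ← entH_eq_partitionEnt, hcode.hWα]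

theorem symmDataEnt_helper (hcode : IsRegenCode n k d B α β P M W S) {i j : Fin n} (hij : i ≠ j) :
    symmDataEnt P W S {(i, j)} = β :=
  symmDataEnt_eq_of_forall fun p => by
    have hp : p i ≠ p j := p.injective.ne hij
    rw [Finset.image_singleton, Prod.map_apply, dataEnt, Finset.inf_singleton, dataKer_of_ne hp,
      ← entH_eq_partitionEnt, hcode.hSβ _ _ hp]

theorem symmDataEnt_diag (hcode : IsRegenCode n k d B α β P M W S) {J : Finset (Fin n)}
    (hJ : k ≤ J.card) : symmDataEnt P W S (J.image fun j => (j, j)) = B :=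
  symmDataEnt_eq_of_forall fun p => by
    have h := hcode.dataEnt_diag (J := J.image p)
      (by rwa [Finset.card_image_of_injective _ p.injective])
    rw [Finset.image_image] at h ⊢
    exact h

end IsRegenCode

end Code

/-- every `(5,4,4)` exact-repair code satisfies `14B ≤ 21α + 57β`. -/
theorem stmt_16 {Ω : Type*} [Fintype Ω] {B α β : ℝ} {P : Ω → ℝ}
    {σM : Type*} {σW : Fin 5 → Type*} {σS : Fin 5 → Fin 5 → Type*}
    {M : Ω → σM} {W : ∀ j, Ω → σW j} {S : ∀ i j, Ω → σS i j}
    (hcode : IsRegenCode 5 4 4 B α β P M W S) :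
    14 * B ≤ 21 * α + 57 * β := by
  have hf : IsRepairPolymatroid (symmDataEnt P W S) := hcode.isRepairPolymatroid
  have hfull : symmDataEnt P W S {(0, 0), (1, 1), (2, 2), (3, 3)} = B :=
    hcode.symmDataEnt_diag (J := {0, 1, 2, 3}) (by simp)
  have h1 := hf.three_mul_full_le
  have h2 := hf.full_le_ten_mul
  rw [hcode.symmDataEnt_server, hcode.symmDataEnt_helper (by decide), hfull] at h1
  rw [hcode.symmDataEnt_helper (by decide), hfull] at h2
  linarith [hcode.hβ]
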